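/- For every integer t ≥ 1, (2/√(3·2^(t+1))) · ∑_{m=0}^{3·2^(t+1)−1} χ_t(m) · cos(2πm/(3·2^(t+1))) = −(1/√(2^(t−1))) · sin(π/2^t). -/

import Mathlib

/-- The periodic function `χ_t` of period `3·2^(t+1)` from the strange identity for the
Kontsevich–Zagier series of the torus knot `T(3, 2^t)`. -/
noncomputable def chiT (t : ℕ) (n : ℤ) : ℝ :=
  if n % (3 * 2 ^ (t + 1)) = (2 ^ (t + 1) - 3) % (3 * 2 ^ (t + 1)) ∨
      n % (3 * 2 ^ (t + 1)) = (2 ^ (t + 2) + 3) % (3 * 2 ^ (t + 1)) then -(1 / 2)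
  else if n % (3 * 2 ^ (t + 1)) = (2 ^ (t + 1) + 3) % (3 * 2 ^ (t + 1)) ∨
      n % (3 * 2 ^ (t + 1)) = (2 ^ (t + 2) - 3) % (3 * 2 ^ (t + 1)) then 1 / 2
  else 0

lemma chiT_ind (s m : ℕ) (hm : m < 12 * 2 ^ s) :
    chiT (s + 1) m = (if m = 4 * 2 ^ s - 3 then -(1 / 2 : ℝ) else 0)
      + (if m = 8 * 2 ^ s + 3 then -(1 / 2 : ℝ) else 0)
      + (if m = 4 * 2 ^ s + 3 then (1 / 2 : ℝ) else 0)
      + (if m = 8 * 2 ^ s - 3 then (1 / 2 : ℝ) else 0) := by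
  unfold chiT
  have e1 : (2 : ℤ) ^ (s + 1 + 1) = 4 * ((2 ^ s : ℕ) : ℤ) := by push_cast; ring
  have e2 : (2 : ℤ) ^ (s + 1 + 2) = 8 * ((2 ^ s : ℕ) : ℤ) := by push_cast; ring
  have hQ : 1 ≤ 2 ^ s := Nat.one_le_two_pow
  rw [e1, e2]
  generalize 2 ^ s = Q at *
  rw [Int.emod_eq_of_lt (a := (m : ℤ)) (by omega) (by omega),
    Int.emod_eq_of_lt (a := 4 * (Q : ℤ) - 3) (by omega) (by omega),
    Int.emod_eq_of_lt (a := 8 * (Q : ℤ) + 3) (by omega) (by omega),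
    Int.emod_eq_of_lt (a := 4 * (Q : ℤ) + 3) (by omega) (by omega),
    Int.emod_eq_of_lt (a := 8 * (Q : ℤ) - 3) (by omega) (by omega)]
  split_ifs <;> first | (exfalso; omega) | norm_num

/-- `G_{χ_t}^{(1)}(1) = −(1/√(2^(t−1))) sin(π/2^t)` for every `t ≥ 1`. -/
theorem G_chiT_one (t : ℕ) (ht : 1 ≤ t) :
    (2 / Real.sqrt (3 * 2 ^ (t + 1))) *
        ∑ m ∈ Finset.range (3 * 2 ^ (t + 1)),
          chiT t m * Real.cos (2 * Real.pi * m / (3 * 2 ^ (t + 1)))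
      = -(1 / Real.sqrt (2 ^ (t - 1))) * Real.sin (Real.pi / 2 ^ t) := by
  obtain ⟨s, rfl⟩ : ∃ s, t = s + 1 := ⟨t - 1, by omega⟩
  have hr : 3 * 2 ^ (s + 1 + 1) = 12 * 2 ^ s := by ring
  have hQ : 1 ≤ 2 ^ s := Nat.one_le_two_pow
  rw [hr]
  rw [Finset.sum_congr rfl (fun (m : ℕ) hm =>
    congrArg (· * Real.cos (2 * Real.pi * (m : ℝ) / (3 * 2 ^ (s + 1 + 1))))
      (chiT_ind s m (Finset.mem_range.1 hm)))]
  simp only [add_mul, Finset.sum_add_distrib, ite_mul, zero_mul, Finset.sum_ite_eq',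
    Finset.mem_range]
  rw [if_pos (by omega), if_pos (by omega), if_pos (by omega), if_pos (by omega)]
  rw [Nat.cast_sub (by omega), Nat.cast_sub (by omega)]
  push_cast
  have e1 : (3 : ℝ) * 2 ^ (s + 1 + 1) = 3 * (2 ^ 2 * 2 ^ s) := by ring
  have e2 : (2 : ℝ) ^ (s + 1) = 2 * 2 ^ s := by ring
  rw [e1, e2]
  have hq : (0 : ℝ) < 2 ^ s := by positivity
  generalize (2 : ℝ) ^ s = q at *
  have c1 : 2 * Real.pi * (4 * q - 3) / (3 * (2 ^ 2 * q))
      = Real.pi - Real.pi / 3 - Real.pi / (2 * q) := by field_simp; ring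
  have c2 : 2 * Real.pi * (8 * q + 3) / (3 * (2 ^ 2 * q))
      = Real.pi / 3 + Real.pi / (2 * q) + Real.pi := by field_simp; ring
  have c3 : 2 * Real.pi * (4 * q + 3) / (3 * (2 ^ 2 * q))
      = Real.pi - Real.pi / 3 + Real.pi / (2 * q) := by field_simp; ring
  have c4 : 2 * Real.pi * (8 * q - 3) / (3 * (2 ^ 2 * q))
      = Real.pi / 3 - Real.pi / (2 * q) + Real.pi := by field_simp; ring
  rw [c1, c2, c3, c4, Real.cos_add_pi, Real.cos_add_pi, Real.cos_sub, Real.cos_add, Real.cos_add,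
    Real.cos_sub, Real.cos_sub (Real.pi / 3), Real.sin_pi_sub, Real.cos_pi, Real.sin_pi, Real.cos_pi_div_three, Real.sin_pi_div_three,
    Real.sqrt_mul (by norm_num), Real.sqrt_mul (by norm_num), Real.sqrt_sq (by norm_num)]
  have h3 : Real.sqrt 3 ≠ 0 := by positivity
  have h4 : Real.sqrt q ≠ 0 := by positivity
  field_simp
  ring
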